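/- arXiv:1510.02839 — 2 statements merged into one kernel-verified Lean document; each statement's English description precedes it below -/
import Mathlib

section
/- Let K be a field with a discrete valuation v, valuation ring O_v = {x ∈ K : x = 0 or v(x) ≥ 0}, maximal ideal m_v = {x ∈ K : x = 0 or v(x) > 0}, and residue field k_v = O_v/m_v. Let π, α, b, c ∈ K with v(π) = 1, v(α) = v(b) = v(c) = 0, and suppose the image of α in k_v is not a square in k_v. Then there are no y, z ∈ K satisfying y² = π⁻³(z² − α)(z² − α − πb)(z² − α − πc). -/
/-!
For a valuation `w`, write `D = z ^ 2 - α`. Since `α` is not a square in the residue field, no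
cancellation occurs in `D`, so that `w D = max 1 (w z) ^ 2`. Both `π * b` and `π * c` have value less
than `1 ≤ w D`, hence the three factors of the sextic have the same value `w D`, and the value of
their product is a square. The equation would then make `w π` a square as well, which is impossible
for a uniformizer.
-/

section Ring

variable {R Γ₀ : Type*} [Ring R] [LinearOrderedCommMonoidWithZero Γ₀] (w : Valuation R Γ₀)

theorem map_sq_sub_eq_max_sq_of_residue_nonsquare {α : R} (hα : w α ≤ 1)
    (hns : ∀ t, w t ≤ 1 → 1 ≤ w (α - t ^ 2)) (z : R) :
    w (z ^ 2 - α) = max 1 (w z) ^ 2 := by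
  rcases le_or_gt (w z) 1 with hz | hz
  · have hle : w (z ^ 2 - α) ≤ 1 :=
      w.map_sub_le (by simpa only [map_pow] using pow_le_one' hz 2) hα
    have hge : 1 ≤ w (z ^ 2 - α) := w.map_sub_swap α (z ^ 2) ▸ hns z hz
    rw [max_eq_left hz, one_pow, hle.antisymm hge]
  · have hlt : w α < w (z ^ 2) := by
      simpa only [map_pow] using hα.trans_lt (one_lt_pow₀ hz two_ne_zero)
    rw [w.map_sub_eq_of_lt_left hlt, map_pow, max_eq_right hz.le]

theorem map_sub_mul_eq_of_one_le {x π b : R} (hx : 1 ≤ w x) (hπ : w π < 1) (hb : w b ≤ 1) :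
    w (x - π * b) = w x := by
  have hπb : w (π * b) < 1 := by
    simpa only [map_mul] using mul_lt_one_of_lt_of_le hπ hb
  exact w.map_sub_eq_of_lt_left (hπb.trans_le hx)

end Ring

section Field

variable {K Γ₀ : Type*} [Field K] [LinearOrderedCommGroupWithZero Γ₀] (w : Valuation K Γ₀)

theorem isSquare_map_of_sq_eq_inv_cube_mul {π x y : K} (hx : w x ≠ 0) (hsq : IsSquare (w x))
    (h : y ^ 2 = π⁻¹ ^ 3 * x) : IsSquare (w π) := by
  rcases eq_or_ne π 0 with rfl | hπ
  · simp only [map_zero, IsSquare.zero]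
  have hπx : π * x = (π ^ 2 * y) ^ 2 := by
    rw [mul_pow, h]
    field_simp
  have hmul : w π * w x = w (π ^ 2 * y) ^ 2 := by rw [← map_mul, hπx, map_pow]
  rw [eq_div_of_mul_eq hx hmul]
  exact (IsSquare.sq _).div hsq

theorem no_points_at_pi_general {π α b c : K} (hπ : w π < 1) (hπsq : ¬ IsSquare (w π))
    (hα : w α ≤ 1) (hb : w b ≤ 1) (hc : w c ≤ 1)
    (hns : ∀ t, w t ≤ 1 → 1 ≤ w (α - t ^ 2)) :
    ¬ ∃ y z : K,
      y ^ 2 = π⁻¹ ^ 3 * ((z ^ 2 - α) * (z ^ 2 - α - π * b) * (z ^ 2 - α - π * c)) := by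
  rintro ⟨y, z, h⟩
  have hD := map_sq_sub_eq_max_sq_of_residue_nonsquare w hα hns z
  have hD1 : 1 ≤ w (z ^ 2 - α) := hD ▸ one_le_pow₀ (le_max_left _ _)
  have hprod : w ((z ^ 2 - α) * (z ^ 2 - α - π * b) * (z ^ 2 - α - π * c)) =
      w (z ^ 2 - α) ^ 3 := by
    rw [map_mul, map_mul, map_sub_mul_eq_of_one_le w hD1 hπ hb,
      map_sub_mul_eq_of_one_le w hD1 hπ hc, pow_three']
  refine hπsq (isSquare_map_of_sq_eq_inv_cube_mul w ?_ ?_ h)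
  · exact hprod ▸ pow_ne_zero 3 (zero_lt_one.trans_le hD1).ne'
  · rw [hprod, hD]
    exact (IsSquare.sq _).pow 3

end Field

section Order

open WithZero

variable {K : Type*} [Field K]

open Classical in
/-- The multiplicative valuation with values in `ℤᵐ⁰` attached to a discrete valuation given by its
additive order function `v`. The order is negated, so that `O_v` becomes `w x ≤ 1` and `m_v` becomes
`w x < 1`; the value `v 0` is ignored. -/
noncomputable def valuationOfOrder (v : K → ℤ)
    (hmul : ∀ x y : K, x ≠ 0 → y ≠ 0 → v (x * y) = v x + v y)
    (hultra : ∀ x y : K, x ≠ 0 → y ≠ 0 → x + y ≠ 0 → min (v x) (v y) ≤ v (x + y)) :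
    Valuation K ℤᵐ⁰ where
  toFun x := if x = 0 then 0 else exp (-v x)
  map_zero' := if_pos rfl
  map_one' := by
    have h : v 1 = v 1 + v 1 := by simpa only [mul_one] using hmul 1 1 one_ne_zero one_ne_zero
    rw [if_neg one_ne_zero, left_eq_add.mp h, neg_zero, exp_zero]
  map_mul' x y := by
    rcases eq_or_ne x 0 with rfl | hx
    · simp only [zero_mul, if_true]
    rcases eq_or_ne y 0 with rfl | hy
    · simp only [mul_zero, if_true]
    rw [if_neg hx, if_neg hy, if_neg (mul_ne_zero hx hy), hmul x y hx hy, neg_add, exp_add]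
  map_add_le_max' x y := by
    rcases eq_or_ne x 0 with rfl | hx
    · rw [zero_add]
      exact le_max_right _ _
    rcases eq_or_ne y 0 with rfl | hy
    · rw [add_zero]
      exact le_max_left _ _
    rcases eq_or_ne (x + y) 0 with hxy | hxy
    · rw [if_pos hxy]
      exact zero_le
    rw [if_neg hx, if_neg hy, if_neg hxy, le_max_iff, exp_le_exp, exp_le_exp, neg_le_neg_iff,
      neg_le_neg_iff, ← min_le_iff]
    exact hultra x y hx hy hxy

variable {v : K → ℤ} {hmul : ∀ x y : K, x ≠ 0 → y ≠ 0 → v (x * y) = v x + v y}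
  {hultra : ∀ x y : K, x ≠ 0 → y ≠ 0 → x + y ≠ 0 → min (v x) (v y) ≤ v (x + y)} {x : K}

theorem valuationOfOrder_of_ne_zero (hx : x ≠ 0) :
    valuationOfOrder v hmul hultra x = exp (-v x) :=
  if_neg hx

theorem valuationOfOrder_le_one_iff :
    valuationOfOrder v hmul hultra x ≤ 1 ↔ x = 0 ∨ 0 ≤ v x := by
  rcases eq_or_ne x 0 with rfl | hx
  · simp only [map_zero, zero_le, true_or]
  · rw [valuationOfOrder_of_ne_zero hx, ← exp_zero, exp_le_exp, neg_nonpos, or_iff_right hx]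

theorem valuationOfOrder_lt_one_iff :
    valuationOfOrder v hmul hultra x < 1 ↔ x = 0 ∨ 0 < v x := by
  rcases eq_or_ne x 0 with rfl | hx
  · simp only [map_zero, zero_lt_one, true_or]
  · rw [valuationOfOrder_of_ne_zero hx, ← exp_zero, exp_lt_exp, neg_lt_zero, or_iff_right hx]

theorem even_of_isSquare_valuationOfOrder (hx : x ≠ 0)
    (h : IsSquare (valuationOfOrder v hmul hultra x)) : Even (v x) := by
  obtain ⟨r, hr⟩ := h
  have hlog : -v x = log (r * r) := by rw [← hr, valuationOfOrder_of_ne_zero hx, log_exp]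
  have hr0 : r ≠ 0 := by
    rintro rfl
    rw [mul_zero] at hr
    exact hx ((map_eq_zero _).mp hr)
  rw [← even_neg, hlog, log_mul hr0 hr0]
  exact Even.add_self _

end Order

/-- Let `K` be a field with a discrete valuation `v` (a surjective
homomorphism `Kˣ → ℤ`, here encoded as a function on nonzero elements of `K`, satisfying
the ultrametric inequality), with valuation ring `O_v = {x : x = 0 ∨ v x ≥ 0}` and
maximal ideal `m_v = {x : x = 0 ∨ v x > 0}`. Let `π, α, b, c ∈ K` with `v π = 1`,
`v α = v b = v c = 0`, and suppose the image of `α` in the residue field `O_v/m_v` is not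
a square (i.e. there is no `t ∈ O_v` with `α - t² ∈ m_v`). Then no `y, z ∈ K` satisfy
`y² = π⁻³(z² − α)(z² − α − πb)(z² − α − πc)`. -/
theorem no_points_at_pi (K : Type*) [Field K] (v : K → ℤ)
    (hmul : ∀ x y : K, x ≠ 0 → y ≠ 0 → v (x * y) = v x + v y)
    (hsurj : ∀ n : ℤ, ∃ x : K, x ≠ 0 ∧ v x = n)
    (hultra : ∀ x y : K, x ≠ 0 → y ≠ 0 → x + y ≠ 0 → min (v x) (v y) ≤ v (x + y))
    (π α b c : K) (hπ : π ≠ 0) (hα : α ≠ 0) (hb : b ≠ 0) (hc : c ≠ 0)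
    (hvπ : v π = 1) (hvα : v α = 0) (hvb : v b = 0) (hvc : v c = 0)
    (hns : ¬ ∃ t : K, (t = 0 ∨ 0 ≤ v t) ∧ (α - t ^ 2 = 0 ∨ 0 < v (α - t ^ 2))) :
    ¬ ∃ y z : K,
      y ^ 2 = π⁻¹ ^ 3 * ((z ^ 2 - α) * (z ^ 2 - α - π * b) * (z ^ 2 - α - π * c)) := by
  let w := valuationOfOrder v hmul hultra
  have hπlt : w π < 1 := valuationOfOrder_lt_one_iff.mpr (.inr (hvπ ▸ one_pos))
  have hπsq : ¬ IsSquare (w π) := fun hsq =>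
    Int.not_even_one (hvπ ▸ even_of_isSquare_valuationOfOrder hπ hsq)
  have hle {x : K} (hx : v x = 0) : w x ≤ 1 := valuationOfOrder_le_one_iff.mpr (.inr hx.ge)
  exact no_points_at_pi_general w hπlt hπsq (hle hvα) (hle hvb) (hle hvc) fun t ht =>
    not_lt.mp fun hlt =>
      hns ⟨t, valuationOfOrder_le_one_iff.mp ht, valuationOfOrder_lt_one_iff.mp hlt⟩
end

section
/- Let K be a field with a discrete valuation v, valuation ring O_v = {x ∈ K : x = 0 or v(x) ≥ 0}, maximal ideal m_v = {x ∈ K : x = 0 or v(x) > 0}, and residue field k_v = O_v/m_v. Let π, α, b, c ∈ K with v(π) odd, v(α) = v(b) = v(c) = 0, and suppose the image of α in k_v is not a square in k_v. Then there are no y, z ∈ K satisfying y² = π⁻³(z² − α)(z² − α − πb)(z² − α − πc). -/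
/-!
Put `w = z² - α`. As `α` is not a square modulo `m_v`, subtracting it from `z²` cancels no leading
term, so `v w` is `v α` or `v (z²)`, hence even. Therefore `v w` differs from the odd
`v (π b) = v (π c)`, and `w - π b`, `w - π c` have the same valuation. The right-hand side
`π⁻³ w (w - π b) (w - π c)` then has odd valuation and cannot be a square.

In multiplicative notation the residual condition on `α` becomes `v α ≤ v (z² - α)` for all `z`, and
"even" becomes `IsSquare`; the same argument then runs over any value group.
-/

open WithZero

section Valuation

variable {R Γ₀ : Type*} [Ring R] [LinearOrderedCommGroupWithZero Γ₀] (v : Valuation R Γ₀)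

theorem one_le_map_sq_sub_of_residue_not_square {α : R} (hα : v α ≤ 1)
    (hns : ¬ ∃ t : R, v t ≤ 1 ∧ v (α - t ^ 2) < 1) (t : R) : 1 ≤ v (t ^ 2 - α) := by
  by_contra! hlt
  have ht : v t ^ 2 ≤ 1 := by
    simpa only [sub_add_cancel, map_pow] using v.map_add_le hlt.le hα
  exact hns ⟨t, (pow_le_one_iff two_ne_zero).mp ht, v.map_sub_swap α _ ▸ hlt⟩

theorem isSquare_map_sq_sub {α : R} (hα : IsSquare (v α)) {z : R}
    (hz : v α ≤ v (z ^ 2 - α)) : IsSquare (v (z ^ 2 - α)) := by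
  rcases lt_or_ge (v α) (v (z ^ 2)) with hlt | hle
  · rw [v.map_sub_eq_of_lt_left hlt, map_pow]
    exact IsSquare.sq _
  · rwa [(v.map_sub_le hle le_rfl).antisymm hz]

theorem map_sub_eq_max_of_ne {x y : R} (hne : v x ≠ v y) : v (x - y) = max (v x) (v y) := by
  rw [sub_eq_add_neg, v.map_add_of_distinct_val (by rwa [v.map_neg]), v.map_neg]

end Valuation

theorem isSquare_of_sq_eq_inv_pow_three_mul {G₀ : Type*} [CommGroupWithZero G₀] {p w m y : G₀}
    (hw : IsSquare w) (hw₀ : w ≠ 0) (hm₀ : m ≠ 0) (h : y ^ 2 = p⁻¹ ^ 3 * (w * m * m)) :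
    IsSquare p := by
  rcases eq_or_ne p 0 with rfl | hp
  · exact IsSquare.zero
  have hpw : p = w * (m / (p * y)) ^ 2 := by
    rw [div_pow, mul_pow, h]
    field_simp
  exact hpw ▸ hw.mul (IsSquare.sq _)

theorem no_points_at_pi_odd_val_general {K Γ₀ : Type*} [DivisionRing K]
    [LinearOrderedCommGroupWithZero Γ₀] (v : Valuation K Γ₀) {π α b c : K}
    (hπ : ¬ IsSquare (v π)) (hπb : ¬ IsSquare (v (π * b))) (hbc : v b = v c)
    (hα₀ : α ≠ 0) (hα : IsSquare (v α)) (hns : ∀ t : K, v α ≤ v (t ^ 2 - α)) :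
    ¬ ∃ y z : K,
      y ^ 2 = π⁻¹ ^ 3 * ((z ^ 2 - α) * (z ^ 2 - α - π * b) * (z ^ 2 - α - π * c)) := by
  rintro ⟨y, z, h⟩
  have hw := isSquare_map_sq_sub v hα (hns z)
  have hw₀ : 0 < v (z ^ 2 - α) := (v.pos_iff.mpr hα₀).trans_le (hns z)
  set w := z ^ 2 - α
  have hne : v w ≠ v (π * b) := fun heq => hπb (heq ▸ hw)
  have hπbc : v (π * b) = v (π * c) := by rw [map_mul, map_mul, hbc]
  have hwbc : v (w - π * c) = v (w - π * b) := by
    rw [map_sub_eq_max_of_ne v hne, map_sub_eq_max_of_ne v (hπbc ▸ hne), hπbc]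
  have hwb₀ : v (w - π * b) ≠ 0 := by
    rw [map_sub_eq_max_of_ne v hne]
    exact (lt_max_of_lt_left hw₀).ne'
  refine hπ (isSquare_of_sq_eq_inv_pow_three_mul hw hw₀.ne' hwb₀ (y := v y) ?_)
  simpa only [map_mul, map_pow, map_inv₀, hwbc] using congrArg v h

theorem isSquare_exp_iff {M : Type*} [AddMonoid M] {a : M} : IsSquare (exp a) ↔ Even a := by
  refine ⟨?_, fun ⟨b, hab⟩ => ⟨exp b, by rw [hab, exp_add]⟩⟩
  rintro ⟨r, hr⟩
  cases r using expRecOn with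
  | zero => simp at hr
  | exp b => exact ⟨b, exp_injective hr⟩

section IntegerValuation

variable {R : Type*} [Ring R] [IsDomain R] (v : R → ℤ)
  (hmul : ∀ x y : R, x ≠ 0 → y ≠ 0 → v (x * y) = v x + v y)
  (hultra : ∀ x y : R, x ≠ 0 → y ≠ 0 → x + y ≠ 0 → min (v x) (v y) ≤ v (x + y))

open Classical in
/-- The multiplicative valuation `x ↦ exp (-v x)` attached to an additive valuation `v` given by its
integer values at nonzero elements. The value `v 0` is arbitrary; `0` is sent to `0`. -/
noncomputable def valuationOfInt : Valuation R ℤᵐ⁰ where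
  toFun x := if x = 0 then 0 else exp (-v x)
  map_zero' := if_pos rfl
  map_one' := by
    have hone := hmul 1 1 one_ne_zero one_ne_zero
    rw [mul_one, left_eq_add] at hone
    simp [hone]
  map_mul' x y := by
    rcases eq_or_ne x 0 with rfl | hx
    · simp
    rcases eq_or_ne y 0 with rfl | hy
    · simp
    simp [hx, hy, hmul x y hx hy, mul_comm]
  map_add_le_max' x y := by
    rcases eq_or_ne x 0 with rfl | hx
    · simp
    rcases eq_or_ne y 0 with rfl | hy
    · simp
    rcases eq_or_ne (x + y) 0 with hxy | hxy
    · simp [hxy]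
    simpa only [hx, hy, hxy, if_false, le_max_iff, exp_le_exp, neg_le_neg_iff, min_le_iff]
      using hultra x y hx hy hxy

variable {x : R}

theorem valuationOfInt_of_ne_zero (hx : x ≠ 0) :
    valuationOfInt v hmul hultra x = exp (-v x) := if_neg hx

theorem valuationOfInt_eq_one (hx : x ≠ 0) (hvx : v x = 0) :
    valuationOfInt v hmul hultra x = 1 := by
  rw [valuationOfInt_of_ne_zero v hmul hultra hx, hvx, neg_zero, exp_zero]

theorem isSquare_valuationOfInt_iff (hx : x ≠ 0) :
    IsSquare (valuationOfInt v hmul hultra x) ↔ Even (v x) := by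
  rw [valuationOfInt_of_ne_zero v hmul hultra hx, isSquare_exp_iff, even_neg]

theorem valuationOfInt_le_one_iff :
    valuationOfInt v hmul hultra x ≤ 1 ↔ x = 0 ∨ 0 ≤ v x := by
  rcases eq_or_ne x 0 with rfl | hx
  · simp
  · rw [valuationOfInt_of_ne_zero v hmul hultra hx, ← exp_zero, exp_le_exp]
    simp [hx]

theorem valuationOfInt_lt_one_iff :
    valuationOfInt v hmul hultra x < 1 ↔ x = 0 ∨ 0 < v x := by
  rcases eq_or_ne x 0 with rfl | hx
  · simp
  · rw [valuationOfInt_of_ne_zero v hmul hultra hx, ← exp_zero, exp_lt_exp]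
    simp [hx]

end IntegerValuation

/-- Let `K` be a field with a discrete valuation `v` (a surjective
homomorphism `Kˣ → ℤ`, here encoded as a function on nonzero elements of `K`, satisfying
the ultrametric inequality), with valuation ring `O_v = {x : x = 0 ∨ v x ≥ 0}` and
maximal ideal `m_v = {x : x = 0 ∨ v x > 0}`. Let `π, α, b, c ∈ K` with `v π` odd,
`v α = v b = v c = 0`, and suppose the image of `α` in the residue field `O_v/m_v` is not
a square (i.e. there is no `t ∈ O_v` with `α - t² ∈ m_v`). Then no `y, z ∈ K` satisfy
`y² = π⁻³(z² − α)(z² − α − πb)(z² − α − πc)`. -/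
theorem no_points_at_pi_odd_val (K : Type*) [Field K] (v : K → ℤ)
    (hmul : ∀ x y : K, x ≠ 0 → y ≠ 0 → v (x * y) = v x + v y)
    (hsurj : ∀ n : ℤ, ∃ x : K, x ≠ 0 ∧ v x = n)
    (hultra : ∀ x y : K, x ≠ 0 → y ≠ 0 → x + y ≠ 0 → min (v x) (v y) ≤ v (x + y))
    (π α b c : K) (hπ : π ≠ 0) (hα : α ≠ 0) (hb : b ≠ 0) (hc : c ≠ 0)
    (hvπ : Odd (v π)) (hvα : v α = 0) (hvb : v b = 0) (hvc : v c = 0)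
    (hns : ¬ ∃ t : K, (t = 0 ∨ 0 ≤ v t) ∧ (α - t ^ 2 = 0 ∨ 0 < v (α - t ^ 2))) :
    ¬ ∃ y z : K,
      y ^ 2 = π⁻¹ ^ 3 * ((z ^ 2 - α) * (z ^ 2 - α - π * b) * (z ^ 2 - α - π * c)) := by
  let V := valuationOfInt v hmul hultra
  have hVα : V α = 1 := valuationOfInt_eq_one v hmul hultra hα hvα
  have hVb : V b = 1 := valuationOfInt_eq_one v hmul hultra hb hvb
  have hVc : V c = 1 := valuationOfInt_eq_one v hmul hultra hc hvc
  have hVπ : ¬ IsSquare (V π) := by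
    rwa [isSquare_valuationOfInt_iff v hmul hultra hπ, Int.not_even_iff_odd]
  have hres : ¬ ∃ t : K, V t ≤ 1 ∧ V (α - t ^ 2) < 1 := by
    simpa only [V, valuationOfInt_le_one_iff, valuationOfInt_lt_one_iff] using hns
  exact no_points_at_pi_odd_val_general V hVπ (by rwa [map_mul, hVb, mul_one]) (hVb.trans hVc.symm)
    hα (hVα ▸ IsSquare.one) (hVα ▸ one_le_map_sq_sub_of_residue_not_square V hVα.le hres)
end
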